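/- For every n ≥ 1, r_6(ℤ_6^n) ≤ 2^{n+1} · √(3^n · r_3(ℤ_3^n)). -/

import Mathlib

/-- `A` contains a `k`-term arithmetic progression `a, a+d, …, a+(k-1)d`
whose terms are pairwise distinct. -/
def IsDistinctAP {G : Type*} [AddCommGroup G] (k : ℕ) (A : Set G) : Prop :=
  ∃ a d : G, (∀ i : Fin k, a + (i : ℕ) • d ∈ A) ∧
    Function.Injective fun i : Fin k => a + (i : ℕ) • d

/-- `rAP k m n` is the largest cardinality of a subset of `(ℤ/mℤ)^n` containing
no `k`-term arithmetic progression of pairwise distinct elements. -/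
noncomputable def rAP (k m n : ℕ) : ℕ :=
  sSup {s : ℕ | ∃ A : Finset (Fin n → ZMod m),
    ¬ IsDistinctAP k (A : Set (Fin n → ZMod m)) ∧ A.card = s}

/-!
Write `(ℤ/2mℤ)^n ≅ (ℤ/2ℤ)^n × (ℤ/mℤ)^n` with `m > 1` odd, and let `B x` be the fibre over
`x ∈ (ℤ/2ℤ)^n` of a set `A` without a `2m`-term progression of distinct elements. If `x ≠ y` and
`B x ∩ B y` contained an `m`-term progression of difference `d` with distinct terms, then `d` would
have order `m`, so `(y - x, d)` would have order `2m`; stepping by it alternates between the fibres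
over `x` and `y`, producing a forbidden progression in `A`. Hence distinct fibres meet in at most
`r = r_m(ℤ_m^n)` points, and Cauchy–Schwarz over `(ℤ/mℤ)^n` gives `|A|² ≤ m^n (|A| + 4^n r)`.

The linear term is absorbed because `m^n ≤ 2^n r`: for a prime `p ∣ m`, a difference of order `m`
has a coordinate prime to `p`, so the vectors with no coordinate divisible by `p` contain no
`m`-term progression of distinct elements.
-/

open Finset

section DoubleCounting

variable {ι α : Type*} [Fintype ι] [DecidableEq α] (B : ι → Finset α)

theorem sum_card_eq_sum_card_filter_mem [Fintype α] :
    ∑ x, #(B x) = ∑ z, #{x | z ∈ B x} := by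
  simpa [bipartiteAbove, bipartiteBelow] using
    sum_card_bipartiteAbove_eq_sum_card_bipartiteBelow (s := univ) (t := univ) fun x z ↦ z ∈ B x

theorem sum_sq_card_filter_mem [Fintype α] :
    ∑ z, #{x | z ∈ B x} ^ 2 = ∑ x, ∑ y, #(B x ∩ B y) := by
  have pairs (z : α) : #{x | z ∈ B x} ^ 2 = #{p : ι × ι | z ∈ B p.1 ∩ B p.2} := by
    rw [sq, ← card_product, ← filter_product, univ_product_univ]
    simp only [mem_inter]
  rw [← Fintype.sum_prod_type' fun x y ↦ #(B x ∩ B y),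
    sum_card_eq_sum_card_filter_mem fun p : ι × ι ↦ B p.1 ∩ B p.2]
  exact sum_congr rfl fun z _ ↦ pairs z

variable {B} in
theorem sum_card_inter_le_of_pairwise {r : ℕ} (hB : Pairwise fun x y ↦ #(B x ∩ B y) ≤ r) :
    ∑ x, ∑ y, #(B x ∩ B y) ≤ ∑ x, #(B x) + Fintype.card ι ^ 2 * r := by
  classical
  have entry (x y : ι) : #(B x ∩ B y) ≤ (if x = y then #(B x) else 0) + r := by
    split_ifs with hxy
    · simp [hxy]
    · simpa using hB hxy
  calc ∑ x, ∑ y, #(B x ∩ B y)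
      ≤ ∑ x, ∑ y, ((if x = y then #(B x) else 0) + r) := by gcongr; exact entry _ _
    _ = ∑ x, #(B x) + Fintype.card ι ^ 2 * r := by simp [sum_add_distrib, sq, mul_assoc]

variable {B} in
theorem sq_sum_card_le_of_pairwise [Fintype α] {r : ℕ}
    (hB : Pairwise fun x y ↦ #(B x ∩ B y) ≤ r) :
    (∑ x, #(B x)) ^ 2 ≤ Fintype.card α * (∑ x, #(B x) + Fintype.card ι ^ 2 * r) :=
  calc (∑ x, #(B x)) ^ 2
      = (∑ z, #{x | z ∈ B x}) ^ 2 := by rw [sum_card_eq_sum_card_filter_mem]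
    _ ≤ Fintype.card α * ∑ z, #{x | z ∈ B x} ^ 2 := sq_sum_le_card_mul_sum_sq
    _ = Fintype.card α * ∑ x, ∑ y, #(B x ∩ B y) := by rw [sum_sq_card_filter_mem]
    _ ≤ Fintype.card α * (∑ x, #(B x) + Fintype.card ι ^ 2 * r) := by
      gcongr; exact sum_card_inter_le_of_pairwise hB

theorem sum_card_filter_equiv_mem {β γ : Type*} [Fintype β] [DecidableEq γ] (e : ι × β ≃ γ)
    (A : Finset γ) : ∑ x, #{z | e (x, z) ∈ A} = #A := by
  have : Fintype γ := Fintype.ofEquiv _ e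
  simp_rw [card_filter]
  rw [← Fintype.sum_prod_type' fun x z ↦ if e (x, z) ∈ A then 1 else 0,
    e.sum_comp fun w ↦ if w ∈ A then 1 else 0]
  simp

end DoubleCounting

section Progressions

variable {G H : Type*} [AddCommGroup G] [AddCommGroup H] {k m : ℕ}

theorem not_isDistinctAP_empty [NeZero k] : ¬ IsDistinctAP k (∅ : Set G) :=
  fun ⟨_, _, hmem, _⟩ ↦ hmem ⟨0, NeZero.pos k⟩

theorem isDistinctAP_of_addOrderOf_eq {A : Set G} {a d : G} (hd : addOrderOf d = k)
    (hA : ∀ i : ℕ, a + i • d ∈ A) : IsDistinctAP k A := by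
  refine ⟨a, d, fun i ↦ hA i, fun i j hij ↦ Fin.ext ?_⟩
  exact nsmul_injOn_Iio_addOrderOf (hd ▸ i.isLt) (hd ▸ j.isLt) (add_left_cancel hij)

theorem IsDistinctAP.exists_addOrderOf_eq [NeZero k] [Module (ZMod k) G] {A : Set G}
    (hA : IsDistinctAP k A) : ∃ a d : G, addOrderOf d = k ∧ ∀ i : ℕ, a + i • d ∈ A := by
  obtain ⟨a, d, hmem, hinj⟩ := hA
  have order_dvd : addOrderOf d ∣ k :=
    addOrderOf_dvd_of_nsmul_eq_zero (ZModModule.char_nsmul_eq_zero k d)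
  have order_pos : 0 < addOrderOf d := Nat.pos_of_dvd_of_pos order_dvd (NeZero.pos k)
  have order_eq : addOrderOf d = k := by
    refine (Nat.le_of_dvd (NeZero.pos k) order_dvd).eq_of_not_lt fun order_lt ↦ order_pos.ne' ?_
    have := @hinj ⟨addOrderOf d, order_lt⟩ ⟨0, NeZero.pos k⟩ (by simp [addOrderOf_nsmul_eq_zero])
    exact congrArg Fin.val this
  refine ⟨a, d, order_eq, fun i ↦ ?_⟩
  rw [← mod_addOrderOf_nsmul]
  exact hmem ⟨i % addOrderOf d, order_eq ▸ Nat.mod_lt i order_pos⟩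

theorem IsDistinctAP.of_preimage {f : G →+ H} (hf : Function.Injective f) {A : Set H}
    (hA : IsDistinctAP k (f ⁻¹' A)) : IsDistinctAP k A := by
  obtain ⟨a, d, hmem, hinj⟩ := hA
  refine ⟨f a, f d, fun i ↦ ?_, ?_⟩
  · simpa using hmem i
  · simpa [Function.comp_def] using hf.comp hinj

theorem add_nsmul_sub_eq_or [Module (ZMod 2) G] (x y : G) (i : ℕ) :
    x + i • (y - x) = x ∨ x + i • (y - x) = y := by
  have two_nsmul_sub : 2 • (y - x) = 0 := ZModModule.char_nsmul_eq_zero 2 (y - x)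
  rcases Nat.even_or_odd' i with ⟨c, rfl | rfl⟩
  · left
    simp [mul_nsmul, two_nsmul_sub]
  · right
    simp [add_nsmul, mul_nsmul, two_nsmul_sub]

theorem isDistinctAP_two_mul_of_isDistinctAP_fibers [Module (ZMod 2) G] [Module (ZMod m) H]
    (hm : Odd m) {A : Set (G × H)} {x y : G} (hxy : x ≠ y)
    (hA : IsDistinctAP m {z | (x, z) ∈ A ∧ (y, z) ∈ A}) : IsDistinctAP (2 * m) A := by
  have : NeZero m := ⟨hm.pos.ne'⟩
  obtain ⟨a, d, order_d, hmem⟩ := hA.exists_addOrderOf_eq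
  have order_sub : addOrderOf (y - x) = 2 :=
    addOrderOf_eq_prime (ZModModule.char_nsmul_eq_zero 2 _) (sub_ne_zero.2 hxy.symm)
  have order_pair : addOrderOf (y - x, d) = 2 * m := by
    rw [Prod.addOrderOf_mk, order_sub, order_d, hm.coprime_two_left.lcm_eq_mul]
  refine isDistinctAP_of_addOrderOf_eq (a := (x, a)) order_pair fun i ↦ ?_
  rw [Prod.smul_mk, Prod.mk_add_mk]
  rcases add_nsmul_sub_eq_or x y i with first_eq | first_eq <;> rw [first_eq]
  · exact (hmem i).1
  · exact (hmem i).2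

end Progressions

section Extremal

variable {k m n : ℕ}

theorem bddAbove_card_not_isDistinctAP (k m n : ℕ) [NeZero m] :
    BddAbove {s : ℕ | ∃ A : Finset (Fin n → ZMod m),
      ¬ IsDistinctAP k (A : Set (Fin n → ZMod m)) ∧ #A = s} := by
  refine ⟨Fintype.card (Fin n → ZMod m), ?_⟩
  rintro _ ⟨A, -, rfl⟩
  exact card_le_univ A

theorem card_le_rAP [NeZero m] {A : Finset (Fin n → ZMod m)}
    (hA : ¬ IsDistinctAP k (A : Set (Fin n → ZMod m))) : #A ≤ rAP k m n :=
  le_csSup (bddAbove_card_not_isDistinctAP k m n) ⟨A, hA, rfl⟩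

theorem exists_card_eq_rAP (k m n : ℕ) [NeZero k] [NeZero m] : ∃ A : Finset (Fin n → ZMod m),
    ¬ IsDistinctAP k (A : Set (Fin n → ZMod m)) ∧ #A = rAP k m n := by
  refine Nat.sSup_mem ?_ (bddAbove_card_not_isDistinctAP k m n)
  exact ⟨0, ∅, by simpa using not_isDistinctAP_empty, rfl⟩

end Extremal

section LowerBound

variable {m p : ℕ}

theorem card_le_two_mul_card_filter_ne_zero {G H : Type*} [AddGroup G] [Fintype G] [AddZeroClass H]
    [DecidableEq H] {f : G →+ H} (hf : f ≠ 0) : Fintype.card G ≤ 2 * #{g | f g ≠ 0} := by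
  obtain ⟨g₀, hg₀⟩ := DFunLike.ne_iff.1 hf
  -- Translation by `g₀` moves the kernel off itself.
  have kernel_le : #{g | f g = 0} ≤ #{g | f g ≠ 0} :=
    card_le_card_of_injOn (· + g₀) (fun g hg ↦ by simp_all) (add_left_injective g₀).injOn
  have split : #{g | f g = 0} + #{g | f g ≠ 0} = Fintype.card G :=
    card_filter_add_card_filter_not _
  omega

theorem nsmul_eq_zero_of_castHom_eq_zero (hpm : p ∣ m) {u : ZMod m}
    (hu : ZMod.castHom hpm (ZMod p) u = 0) : (m / p) • u = 0 := by
  obtain ⟨a, rfl⟩ := ZMod.intCast_surjective u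
  rw [map_intCast, ZMod.intCast_zmod_eq_zero_iff_dvd] at hu
  obtain ⟨b, rfl⟩ := hu
  rw [nsmul_eq_mul, Int.cast_mul, Int.cast_natCast, ← mul_assoc, ← Nat.cast_mul,
    Nat.div_mul_cancel hpm, ZMod.natCast_self, zero_mul]

theorem not_isDistinctAP_castHom_ne_zero {ι : Type*} [Fact p.Prime] [NeZero m] (hpm : p ∣ m) :
    ¬ IsDistinctAP m {x : ι → ZMod m | ∀ j, ZMod.castHom hpm (ZMod p) (x j) ≠ 0} := by
  intro hAP
  obtain ⟨a, d, order_d, hmem⟩ := hAP.exists_addOrderOf_eq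
  have prime_p : p.Prime := Fact.out
  obtain ⟨j, hj⟩ : ∃ j, ZMod.castHom hpm (ZMod p) (d j) ≠ 0 := by
    by_contra! hd
    have : (m / p) • d = 0 := funext fun j ↦ nsmul_eq_zero_of_castHom_eq_zero hpm (hd j)
    refine nsmul_ne_zero_of_lt_addOrderOf ?_ ?_ this
    · exact (Nat.div_pos (Nat.le_of_dvd (NeZero.pos m) hpm) prime_p.pos).ne'
    · rw [order_d]
      exact Nat.div_lt_self (NeZero.pos m) prime_p.one_lt
  set π := ZMod.castHom hpm (ZMod p)
  -- `π ∘ (a + · • d) j` runs through all of the field `ZMod p`, so it vanishes somewhere.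
  let i := (-π (a j) / π (d j)).val
  have hits_zero : π ((a + i • d) j) = 0 := by
    rw [Pi.add_apply, Pi.smul_apply, map_add, map_nsmul, nsmul_eq_mul, ZMod.natCast_zmod_val,
      div_mul_cancel₀ _ hj, add_neg_cancel]
  exact hmem i j hits_zero

theorem pow_le_two_pow_mul_rAP (hm : 1 < m) (n : ℕ) : m ^ n ≤ 2 ^ n * rAP m m n := by
  have : NeZero m := ⟨by omega⟩
  have : Fact m.minFac.Prime := ⟨Nat.minFac_prime hm.ne'⟩
  let π := ZMod.castHom m.minFac_dvd (ZMod m.minFac)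
  let U : Finset (ZMod m) := {u | π u ≠ 0}
  have card_U : m ≤ 2 * #U := by
    have π_ne_zero : π.toAddMonoidHom ≠ 0 := DFunLike.ne_iff.2 ⟨1, by simp⟩
    simpa using card_le_two_mul_card_filter_ne_zero π_ne_zero
  have avoid : ¬ IsDistinctAP m
      (Fintype.piFinset fun _ : Fin n ↦ U : Set (Fin n → ZMod m)) := by
    convert not_isDistinctAP_castHom_ne_zero (ι := Fin n) m.minFac_dvd using 2
    ext x
    simp only [mem_coe, Fintype.mem_piFinset, U, mem_filter_univ, Set.mem_ofPred_eq, π]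
  calc m ^ n ≤ (2 * #U) ^ n := by gcongr
    _ = 2 ^ n * #(Fintype.piFinset fun _ : Fin n ↦ U) := by
      rw [mul_pow, Fintype.card_piFinset_const]
    _ ≤ 2 ^ n * rAP m m n := by gcongr; exact card_le_rAP avoid

end LowerBound

section ChineseRemainder

/-- The Chinese remainder isomorphism `(ℤ/lmℤ)^ι ≅ (ℤ/lℤ)^ι × (ℤ/mℤ)^ι`, which splits a subset of
`(ℤ/2mℤ)^n` into fibres indexed by `(ℤ/2ℤ)^n`. -/
def chineseRemainderPi (ι : Type*) {l m : ℕ} (h : l.Coprime m) :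
    (ι → ZMod (l * m)) ≃+ (ι → ZMod l) × (ι → ZMod m) where
  toEquiv := (Equiv.piCongrRight fun _ ↦ (ZMod.chineseRemainder h).toEquiv).trans
    (Equiv.arrowProdEquivProdArrow ι (fun _ ↦ ZMod l) fun _ ↦ ZMod m)
  map_add' f g := by ext <;> simp [Equiv.arrowProdEquivProdArrow]

theorem sq_card_le_of_not_isDistinctAP {m n : ℕ} (hm : Odd m)
    {A : Finset (Fin n → ZMod (2 * m))}
    (hA : ¬ IsDistinctAP (2 * m) (A : Set (Fin n → ZMod (2 * m)))) :
    #A ^ 2 ≤ m ^ n * (#A + (2 ^ n) ^ 2 * rAP m m n) := by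
  have : NeZero m := ⟨hm.pos.ne'⟩
  let e := (chineseRemainderPi (Fin n) hm.coprime_two_left).symm
  let B (x : Fin n → ZMod 2) : Finset (Fin n → ZMod m) := {z | e (x, z) ∈ A}
  have sum_card_B : ∑ x, #(B x) = #A := sum_card_filter_equiv_mem e.toEquiv A
  have card_inter_le : Pairwise fun x y ↦ #(B x ∩ B y) ≤ rAP m m n := by
    refine fun x y hxy ↦ card_le_rAP fun hAP ↦ hA ?_
    refine IsDistinctAP.of_preimage (f := e.toAddMonoidHom) e.injective ?_
    exact isDistinctAP_two_mul_of_isDistinctAP_fibers hm hxy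
      (by simpa [B, Set.ofPred_and] using hAP)
  simpa [sum_card_B] using sq_sum_card_le_of_pairwise card_inter_le

end ChineseRemainder

theorem sq_le_four_mul_of_sq_le_mul_add {a M Q : ℝ} (hM : 0 ≤ M) (hMQ : M ≤ Q)
    (h : a ^ 2 ≤ M * (a + Q)) : a ^ 2 ≤ 4 * (M * Q) := by
  have amgm : 2 * a * M ≤ a ^ 2 + M ^ 2 := two_mul_le_add_sq a M
  have sq_M_le : M * M ≤ M * Q := mul_le_mul_of_nonneg_left hMQ hM
  linarith [mul_nonneg hM (hM.trans hMQ)]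

theorem r6_le_sqrt_general {m : ℕ} (hm : Odd m) (one_lt_m : 1 < m) (n : ℕ) :
    (rAP (2 * m) (2 * m) n : ℝ) ≤ 2 ^ (n + 1) * √(m ^ n * rAP m m n) := by
  have : NeZero m := ⟨hm.pos.ne'⟩
  obtain ⟨A, hA, card_A⟩ := exists_card_eq_rAP (2 * m) (2 * m) n
  have quadratic : (#A : ℝ) ^ 2 ≤ m ^ n * (#A + (2 ^ n) ^ 2 * rAP m m n) :=
    mod_cast sq_card_le_of_not_isDistinctAP hm hA
  have lower : (m : ℝ) ^ n ≤ (2 ^ n) ^ 2 * rAP m m n :=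
    calc (m : ℝ) ^ n ≤ 2 ^ n * rAP m m n := mod_cast pow_le_two_pow_mul_rAP one_lt_m n
      _ ≤ (2 ^ n) ^ 2 * rAP m m n := by
        gcongr ?_ * _
        exact le_self_pow₀ (one_le_pow₀ one_le_two) two_ne_zero
  rw [← card_A, ← Real.sqrt_sq (show (0 : ℝ) ≤ 2 ^ (n + 1) by positivity),
    ← Real.sqrt_mul (by positivity)]
  refine Real.le_sqrt_of_sq_le ?_
  calc (#A : ℝ) ^ 2 ≤ 4 * (m ^ n * ((2 ^ n) ^ 2 * rAP m m n)) :=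
      sq_le_four_mul_of_sq_le_mul_add (by positivity) lower quadratic
    _ = (2 ^ (n + 1)) ^ 2 * (m ^ n * rAP m m n) := by ring

theorem r6_le_sqrt (n : ℕ) (hn : 1 ≤ n) :
    (rAP 6 6 n : ℝ) ≤ 2 ^ (n + 1) * Real.sqrt (3 ^ n * rAP 3 3 n) := by
  exact_mod_cast r6_le_sqrt_general (m := 3) (by decide) (by norm_num) n
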